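/- arXiv:1912.13515 — 5 statements merged into one kernel-verified Lean document; each statement's English description precedes it below -/
import Mathlib

section
/- Let Φ : ℝ^d → ℝ be differentiable with L-Lipschitz gradient, bounded below by Φ* (i.e. Φ(x) ≥ Φ* for all x), let η > 0 satisfy Lη ≤ 1/2, and let x_0, F_0, F_1, …, F_{T−1} ∈ ℝ^d define iterates x_{t+1} = x_t − η F_t for t = 0,…,T−1 (T ≥ 1). Then (1/T) Σ_{t=0}^{T−1} ‖∇Φ(x_t)‖² ≤ (2/(Tη)) (Φ(x_0) − Φ*) + (1/T) ( Σ_{t=0}^{T−1} ‖F_t − ∇Φ(x_t)‖² − (1/2) Σ_{t=0}^{T−1} ‖F_t‖² ). -/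
open scoped BigOperators

theorem descent_aux {d : ℕ} {L : ℝ} {Φ : EuclideanSpace ℝ (Fin d) → ℝ} (hΦ : Differentiable ℝ Φ)
    (hlip : ∀ x x', ‖gradient Φ x - gradient Φ x'‖ ≤ L * ‖x - x'‖)
    (x v : EuclideanSpace ℝ (Fin d)) :
    Φ (x + v) ≤ Φ x + inner ℝ (gradient Φ x) v + L / 2 * ‖v‖ ^ 2 := by
  let g : ℝ → ℝ := fun s => Φ (x + s • v) - s * inner ℝ (gradient Φ x) v - L / 2 * ‖v‖ ^ 2 * s ^ 2
  have hg : ∀ s, HasDerivAt g (inner ℝ (gradient Φ (x + s • v)) v - inner ℝ (gradient Φ x) v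
      - L * ‖v‖ ^ 2 * s) s := by
    intro s
    have h1 : HasDerivAt (fun s : ℝ => x + s • v) v s := by
      simpa using ((hasDerivAt_id s).smul_const v).const_add x
    have h2 := (hΦ (x + s • v)).hasGradientAt.hasFDerivAt.comp_hasDerivAt s h1
    have h3 := (h2.sub ((hasDerivAt_id s).mul_const (inner ℝ (gradient Φ x) v))).sub
      ((hasDerivAt_pow 2 s).const_mul (L / 2 * ‖v‖ ^ 2))
    refine HasDerivAt.congr_deriv h3 ?_
    simp
    ring
  have hanti : AntitoneOn g (Set.Icc 0 1) := by
    apply antitoneOn_of_deriv_nonpos (convex_Icc 0 1)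
    · exact fun s _ => (hg s).continuousAt.continuousWithinAt
    · exact fun s _ => (hg s).differentiableAt.differentiableWithinAt
    · intro s hs
      rw [interior_Icc] at hs
      rw [(hg s).deriv, ← inner_sub_left]
      have h1 := real_inner_le_norm (gradient Φ (x + s • v) - gradient Φ x) v
      have h2 := mul_le_mul_of_nonneg_right (hlip (x + s • v) x) (norm_nonneg v)
      rw [add_sub_cancel_left, norm_smul, Real.norm_of_nonneg hs.1.le] at h2
      nlinarith
  have := hanti (Set.left_mem_Icc.2 zero_le_one) (Set.right_mem_Icc.2 zero_le_one) zero_le_one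
  simp only [g, one_smul, zero_smul, add_zero] at this
  linarith

/-- Telescoped descent inequality along the iterates `x_{t+1} = x_t − η F_t`:
`(1/T) Σ ‖∇Φ(x_t)‖² ≤ (2/(Tη))(Φ(x_0) − Φ*) + (1/T)(Σ ‖F_t − ∇Φ(x_t)‖² − (1/2) Σ ‖F_t‖²)`. -/
theorem telescoped_descent_inequality
    (d : ℕ) (L η Φstar : ℝ) (T : ℕ) (hT : 1 ≤ T)
    (hL : 0 < L) (hη : 0 < η) (hLη : L * η ≤ 1 / 2)
    (Φ : EuclideanSpace ℝ (Fin d) → ℝ) (hΦ : Differentiable ℝ Φ)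
    (hlip : ∀ x x', ‖gradient Φ x - gradient Φ x'‖ ≤ L * ‖x - x'‖)
    (hbound : ∀ x, Φstar ≤ Φ x)
    (x F : ℕ → EuclideanSpace ℝ (Fin d))
    (hupd : ∀ t < T, x (t + 1) = x t - η • F t) :
    (1 / (T : ℝ)) * ∑ t ∈ Finset.range T, ‖gradient Φ (x t)‖ ^ 2
      ≤ 2 / ((T : ℝ) * η) * (Φ (x 0) - Φstar)
        + (1 / (T : ℝ)) * (∑ t ∈ Finset.range T, ‖F t - gradient Φ (x t)‖ ^ 2
            - 1 / 2 * ∑ t ∈ Finset.range T, ‖F t‖ ^ 2) := by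
  have step : ∀ t < T, ‖gradient Φ (x t)‖ ^ 2 ≤ 2 / η * (Φ (x t) - Φ (x (t + 1)))
      + (‖F t - gradient Φ (x t)‖ ^ 2 - 1 / 2 * ‖F t‖ ^ 2) := by
    intro t ht
    have h := descent_aux hΦ hlip (x t) (-(η • F t))
    rw [← sub_eq_add_neg, ← hupd t ht, inner_neg_right, inner_smul_right, norm_neg, norm_smul,
      Real.norm_of_nonneg hη.le] at h
    have h1 := norm_sub_sq_real (F t) (gradient Φ (x t))
    rw [real_inner_comm] at h1
    have h2 : L * η * (η * ‖F t‖ ^ 2) ≤ 1 / 2 * (η * ‖F t‖ ^ 2) :=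
      mul_le_mul_of_nonneg_right hLη (by positivity)
    rw [h1]
    have h3 : 2 * inner ℝ (gradient Φ (x t)) (F t) - 1 / 2 * ‖F t‖ ^ 2
        ≤ 2 / η * (Φ (x t) - Φ (x (t + 1))) := by
      rw [div_mul_eq_mul_div 2 η, le_div_iff₀ hη]
      nlinarith
    linarith
  have hsum := Finset.sum_le_sum (fun t ht => step t (Finset.mem_range.1 ht))
  rw [Finset.sum_add_distrib, ← Finset.mul_sum, Finset.sum_range_sub', Finset.sum_sub_distrib,
    ← Finset.mul_sum] at hsum
  have hT0 : (0 : ℝ) < T := by exact_mod_cast hT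
  have h4 : 2 / η * (Φ (x 0) - Φ (x T)) ≤ 2 / η * (Φ (x 0) - Φstar) := by
    have := hbound (x T)
    gcongr
  have h5 : 2 / ((T : ℝ) * η) * (Φ (x 0) - Φstar)
      = 1 / (T : ℝ) * (2 / η * (Φ (x 0) - Φstar)) := by
    field_simp
  rw [h5, ← mul_add]
  apply mul_le_mul_of_nonneg_left _ (by positivity)
  linarith
end

section
/- Let q ≥ 1 be an integer, T ≥ 1 an integer, C ≥ 0 and K ≥ 0 real numbers with Kq ≤ 1/2, and let (a_t)_{t=0}^{T−1}, (b_t)_{t=0}^{T−1} be nonnegative reals such that for every t with 0 ≤ t ≤ T−1, a_t ≤ C + K Σ_{s = ⌊t/q⌋·q}^{t−1} b_s. Then (1/T) Σ_{t=0}^{T−1} a_t − (1/(2T)) Σ_{t=0}^{T−1} b_t ≤ C. -/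
open scoped BigOperators

/-- Epoch-wise recursion bound: if `a_t ≤ C + K Σ_{s=⌊t/q⌋q}^{t−1} b_s` for all `t < T`
with `Kq ≤ 1/2`, then `(1/T) Σ a_t − (1/(2T)) Σ b_t ≤ C`. -/
theorem epoch_recursion_average_bound
    (q T : ℕ) (hq : 1 ≤ q) (hT : 1 ≤ T)
    (C K : ℝ) (hC : 0 ≤ C) (hK : 0 ≤ K) (hKq : K * (q : ℝ) ≤ 1 / 2)
    (a b : ℕ → ℝ)
    (ha : ∀ t < T, 0 ≤ a t) (hb : ∀ t < T, 0 ≤ b t)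
    (hrec : ∀ t < T, a t ≤ C + K * ∑ s ∈ Finset.Ico (t / q * q) t, b s) :
    (1 / (T : ℝ)) * ∑ t ∈ Finset.range T, a t
      - 1 / (2 * (T : ℝ)) * ∑ t ∈ Finset.range T, b t ≤ C := by
  have hswap : ∑ t ∈ Finset.range T, ∑ s ∈ Finset.Ico (t / q * q) t, b s
      = ∑ s ∈ Finset.range T, ∑ _t ∈ (Finset.range T).filter
          (fun t => t / q * q ≤ s ∧ s < t), b s := by
    apply Finset.sum_comm'
    intro t s
    simp only [Finset.mem_range, Finset.mem_Ico, Finset.mem_filter]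
    constructor
    · rintro ⟨h1, h2, h3⟩
      exact ⟨⟨h1, h2, h3⟩, by omega⟩
    · rintro ⟨⟨h1, h2, h3⟩, _⟩
      exact ⟨h1, h2, h3⟩
  have hle : ∑ t ∈ Finset.range T, ∑ s ∈ Finset.Ico (t / q * q) t, b s
      ≤ (q : ℝ) * ∑ s ∈ Finset.range T, b s := by
    rw [hswap, Finset.mul_sum]
    apply Finset.sum_le_sum
    intro s hs
    rw [Finset.sum_const, nsmul_eq_mul]
    apply mul_le_mul_of_nonneg_right _ (hb s (Finset.mem_range.1 hs))
    have hsub : (Finset.range T).filter (fun t => t / q * q ≤ s ∧ s < t)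
        ⊆ Finset.Ico (s + 1) (s + 1 + q) := by
      intro t ht
      simp only [Finset.mem_range, Finset.mem_Ico, Finset.mem_filter] at ht ⊢
      have h1 := Nat.div_add_mod' t q
      have h2 := Nat.mod_lt t hq
      omega
    have := Finset.card_le_card hsub
    rw [Nat.card_Ico] at this
    exact_mod_cast (by omega : _ ≤ q)
  have hB : 0 ≤ ∑ s ∈ Finset.range T, b s :=
    Finset.sum_nonneg fun s hs => hb s (Finset.mem_range.1 hs)
  have hA : ∑ t ∈ Finset.range T, a t ≤ T * C
      + K * ∑ t ∈ Finset.range T, ∑ s ∈ Finset.Ico (t / q * q) t, b s := by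
    refine (Finset.sum_le_sum fun t ht => hrec t (Finset.mem_range.1 ht)).trans ?_
    rw [Finset.sum_add_distrib, ← Finset.mul_sum]
    simp
  have h1 := mul_le_mul_of_nonneg_left hle hK
  have h2 := mul_le_mul_of_nonneg_right hKq hB
  have hT0 : (0 : ℝ) < T := by exact_mod_cast hT
  have h3 : (1 / (T : ℝ)) * ∑ t ∈ Finset.range T, a t
      - 1 / (2 * (T : ℝ)) * ∑ t ∈ Finset.range T, b t
      = (∑ t ∈ Finset.range T, a t - 1 / 2 * ∑ t ∈ Finset.range T, b t) / T := by
    field_simp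
  rw [h3, div_le_iff₀ hT0]
  linarith
end

section
/- Let Φ : ℝ^d → ℝ be differentiable with L_Φ-Lipschitz gradient, bounded below by Φ*, let S_o > 0, ω ≥ 0, let q ≥ 1 and T ≥ 1 be integers, let η > 0 satisfy 2 L_Φ η ≤ 1 and 6 S_o q η² ≤ 1, and let x_0, F_0, …, F_{T−1} ∈ ℝ^d define iterates x_{t+1} = x_t − η F_t. Suppose that for every t with 0 ≤ t ≤ T−1, ‖F_t − ∇Φ(x_t)‖² ≤ ω + 3 S_o η² Σ_{s = ⌊t/q⌋·q}^{t−1} ‖F_s‖². Then (1/T) Σ_{t=0}^{T−1} ‖∇Φ(x_t)‖² ≤ (2/(Tη)) (Φ(x_0) − Φ*) + ω. -/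
open scoped BigOperators

theorem aux_descent {d : ℕ} (L : ℝ)
    (Φ : EuclideanSpace ℝ (Fin d) → ℝ) (hΦ : Differentiable ℝ Φ)
    (hlip : ∀ x x', ‖gradient Φ x - gradient Φ x'‖ ≤ L * ‖x - x'‖)
    (x v : EuclideanSpace ℝ (Fin d)) :
    Φ (x + v) ≤ Φ x + inner ℝ (gradient Φ x) v + L / 2 * ‖v‖ ^ 2 := by
  have hk : ∀ τ : ℝ, HasDerivAt (fun τ : ℝ => Φ (x + τ • v))
      (inner ℝ (gradient Φ (x + τ • v)) v) τ := by
    intro τ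
    have h1 : HasDerivAt (fun τ : ℝ => x + τ • v) v τ := by
      simpa using ((hasDerivAt_id τ).smul_const v).const_add x
    have h2 := (hΦ (x + τ • v)).hasGradientAt.hasFDerivAt
    have h3 := h2.comp_hasDerivAt τ h1
    rw [InnerProductSpace.toDual_apply_apply] at h3
    exact h3
  have hB : ∀ τ : ℝ, HasDerivAt
      (fun τ : ℝ => Φ x + τ * inner ℝ (gradient Φ x) v + L / 2 * ‖v‖ ^ 2 * τ ^ 2)
      (inner ℝ (gradient Φ x) v + L * ‖v‖ ^ 2 * τ) τ := by
    intro τ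
    have h := (((hasDerivAt_id τ).mul_const (inner ℝ (gradient Φ x) v)).const_add (Φ x)).add
      (((hasDerivAt_id τ).pow 2).const_mul (L / 2 * ‖v‖ ^ 2))
    refine HasDerivAt.congr_deriv h ?_
    simp only [id]
    norm_num
    ring
  have key := image_le_of_deriv_right_le_deriv_boundary (a := 0) (b := 1)
    (f := fun τ : ℝ => Φ (x + τ • v))
    (fun τ _ => (hk τ).continuousAt.continuousWithinAt)
    (fun τ _ => (hk τ).hasDerivWithinAt)
    (B := fun τ : ℝ => Φ x + τ * inner ℝ (gradient Φ x) v + L / 2 * ‖v‖ ^ 2 * τ ^ 2)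
    (by simp)
    (fun τ _ => (hB τ).continuousAt.continuousWithinAt)
    (fun τ _ => (hB τ).hasDerivWithinAt)
    (by
      intro τ hτ
      have h1 : inner ℝ (gradient Φ (x + τ • v) - gradient Φ x) v
          ≤ ‖gradient Φ (x + τ • v) - gradient Φ x‖ * ‖v‖ := real_inner_le_norm _ _
      have h2 := hlip (x + τ • v) x
      rw [add_sub_cancel_left, norm_smul, Real.norm_eq_abs, abs_of_nonneg hτ.1] at h2
      rw [inner_sub_left] at h1
      have h3 := mul_le_mul_of_nonneg_right h2 (norm_nonneg v)
      nlinarith)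
    (Set.right_mem_Icc.2 zero_le_one)
  simpa using key

theorem aux_sum (q T : ℕ) (hq : 1 ≤ q) (a : ℕ → ℝ) (ha : ∀ s, 0 ≤ a s) :
    ∑ t ∈ Finset.range T, ∑ s ∈ Finset.Ico (t / q * q) t, a s
      ≤ q * ∑ s ∈ Finset.range T, a s := by
  have h1 : ∑ t ∈ Finset.range T, ∑ s ∈ Finset.Ico (t / q * q) t, a s
      ≤ ∑ s ∈ Finset.range T, ∑ t ∈ Finset.Ico s (s + q), a s := by
    rw [Finset.sum_sigma', Finset.sum_sigma']
    have : ∑ p ∈ (Finset.range T).sigma (fun t => Finset.Ico (t / q * q) t), a p.2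
        = ∑ p ∈ ((Finset.range T).sigma (fun t => Finset.Ico (t / q * q) t)).image
          (fun p => (⟨p.2, p.1⟩ : Σ _ : ℕ, ℕ)), a p.1 := by
      rw [Finset.sum_image]
      rintro ⟨a, b⟩ _ ⟨c, d⟩ _ h
      simp at h
      simp [h]
    rw [this]
    apply Finset.sum_le_sum_of_subset_of_nonneg
    · rintro ⟨s, t⟩ h
      simp only [Finset.mem_image, Finset.mem_sigma, Finset.mem_range, Finset.mem_Ico] at h ⊢
      obtain ⟨⟨t', s'⟩, ⟨h1, h2, h3⟩, h4⟩ := h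
      simp at h4
      obtain ⟨rfl, rfl⟩ := h4
      have := Nat.lt_div_mul_add (a := t') (b := q) (by omega)
      dsimp only at *
      omega
    · intros; exact ha _
  refine h1.trans (le_of_eq ?_)
  simp [Finset.mul_sum]

/-- Key lemma (deterministic form): along iterates `x_{t+1} = x_t − η F_t`, if the
gradient-estimation error satisfies the SARAH epoch recursion
`‖F_t − ∇Φ(x_t)‖² ≤ ω + 3 S_o η² Σ_{s=⌊t/q⌋q}^{t−1} ‖F_s‖²` and the stepsize satisfies
`2 L_Φ η ≤ 1` and `6 S_o q η² ≤ 1`, then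
`(1/T) Σ ‖∇Φ(x_t)‖² ≤ (2/(Tη))(Φ(x_0) − Φ*) + ω`. -/
theorem sarah_compositional_key_lemma
    (d : ℕ) (LΦ η Φstar So ω : ℝ) (q T : ℕ) (hq : 1 ≤ q) (hT : 1 ≤ T)
    (hLΦ : 0 ≤ LΦ) (hSo : 0 < So) (hω : 0 ≤ ω) (hη : 0 < η)
    (hη1 : 2 * LΦ * η ≤ 1) (hη2 : 6 * So * (q : ℝ) * η ^ 2 ≤ 1)
    (Φ : EuclideanSpace ℝ (Fin d) → ℝ) (hΦ : Differentiable ℝ Φ)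
    (hlip : ∀ x x', ‖gradient Φ x - gradient Φ x'‖ ≤ LΦ * ‖x - x'‖)
    (hbound : ∀ x, Φstar ≤ Φ x)
    (x F : ℕ → EuclideanSpace ℝ (Fin d))
    (hupd : ∀ t < T, x (t + 1) = x t - η • F t)
    (herr : ∀ t < T, ‖F t - gradient Φ (x t)‖ ^ 2
        ≤ ω + 3 * So * η ^ 2 * ∑ s ∈ Finset.Ico (t / q * q) t, ‖F s‖ ^ 2) :
    (1 / (T : ℝ)) * ∑ t ∈ Finset.range T, ‖gradient Φ (x t)‖ ^ 2
      ≤ 2 / ((T : ℝ) * η) * (Φ (x 0) - Φstar) + ω := by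
  have hstep : ∀ t ∈ Finset.range T, η / 2 * ‖gradient Φ (x t)‖ ^ 2 ≤
      (Φ (x t) - Φ (x (t + 1))) + (-(η / 4) * ‖F t‖ ^ 2 + η / 2 * (ω + 3 * So * η ^ 2 *
        ∑ s ∈ Finset.Ico (t / q * q) t, ‖F s‖ ^ 2)) := by
    intro t ht
    have ht := Finset.mem_range.1 ht
    have h1 := aux_descent LΦ Φ hΦ hlip (x t) (-(η • F t))
    rw [← sub_eq_add_neg, ← hupd t ht, inner_neg_right, inner_smul_right, norm_neg, norm_smul,
      Real.norm_eq_abs, abs_of_pos hη] at h1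
    have h2 := mul_le_mul_of_nonneg_left (herr t ht) (by positivity : 0 ≤ η / 2)
    rw [norm_sub_sq_real, real_inner_comm] at h2
    have h3 : LΦ / 2 * (η * ‖F t‖) ^ 2 ≤ η / 4 * ‖F t‖ ^ 2 := by
      have := mul_le_mul_of_nonneg_right hη1 (by positivity : 0 ≤ η / 4 * ‖F t‖ ^ 2)
      linarith
    linarith
  have hsum := Finset.sum_le_sum hstep
  rw [Finset.sum_add_distrib, Finset.sum_range_sub' (fun t => Φ (x t)), Finset.sum_add_distrib,
    ← Finset.mul_sum, ← Finset.mul_sum, ← Finset.mul_sum, Finset.sum_add_distrib,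
    ← Finset.mul_sum] at hsum
  simp only [Finset.sum_const, Finset.card_range, nsmul_eq_mul] at hsum
  have hd := aux_sum q T hq (fun s => ‖F s‖ ^ 2) (fun s => by positivity)
  have hA : 0 ≤ ∑ s ∈ Finset.range T, ‖F s‖ ^ 2 := Finset.sum_nonneg fun _ _ => by positivity
  have hb := hbound (x T)
  have hT' : (0 : ℝ) < T := by exact_mod_cast hT
  generalize (∑ t ∈ Finset.range T, ∑ s ∈ Finset.Ico (t / q * q) t, ‖F s‖ ^ 2) = D at *
  generalize (∑ s ∈ Finset.range T, ‖F s‖ ^ 2) = A at *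
  generalize (∑ t ∈ Finset.range T, ‖gradient Φ (x t)‖ ^ 2) = G at *
  have h4 : 3 * So * η ^ 2 * D ≤ A / 2 := by
    have := mul_le_mul_of_nonneg_left hd (by positivity : 0 ≤ 3 * So * η ^ 2)
    have := mul_le_mul_of_nonneg_right hη2 hA
    linarith
  have h5 := mul_le_mul_of_nonneg_left h4 (by positivity : 0 ≤ η / 2)
  have h6 : η / 2 * G ≤ (Φ (x 0) - Φstar) + η / 2 * (T * ω) := by linarith
  have h7 := mul_le_mul_of_nonneg_left h6 (by positivity : 0 ≤ 2 / (T * η))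
  have e1 : 2 / (T * η) * (η / 2 * G) = 1 / (T : ℝ) * G := by field_simp
  have e2 : 2 / (T * η) * ((Φ (x 0) - Φstar) + η / 2 * (T * ω))
      = 2 / (T * η) * (Φ (x 0) - Φstar) + ω := by field_simp
  rw [e1, e2] at h7
  exact h7
end

section
/- Let f_1, …, f_n : ℝ^l → ℝ be differentiable and set ∇f(y) = (1/n) Σ_{i=1}^n ∇f_i(y). Let G, G′ be l × d real matrices, let u, u′ ∈ ℝ^l, and let F₀ ∈ ℝ^d. Then (1/n) Σ_{i=1}^n ‖F₀ − (G′)ᵀ ∇f_i(u′) + Gᵀ ∇f_i(u) − Gᵀ ∇f(u)‖² ≤ ‖F₀ − (G′)ᵀ ∇f(u′)‖² + (1/n) Σ_{i=1}^n ‖Gᵀ ∇f_i(u) − (G′)ᵀ ∇f_i(u′)‖². -/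
open scoped BigOperators

theorem aux_mean {E : Type*} [NormedAddCommGroup E] [InnerProductSpace ℝ E] (n : ℕ) (hn : 0 < n)
    (x : Fin n → E) (c m : E) (hm : m = (1 / (n : ℝ)) • ∑ i, x i) :
    (1 / (n : ℝ)) * ∑ i, ‖(c - m) + x i‖ ^ 2 ≤ ‖c‖ ^ 2 + (1 / (n : ℝ)) * ∑ i, ‖x i‖ ^ 2 := by
  have hn' : (n : ℝ) ≠ 0 := by positivity
  have h2 : (1 / (n : ℝ)) * inner ℝ (c - m) (∑ i, x i) = inner ℝ (c - m) m := by
    rw [hm, inner_smul_right]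
  have h3 : ‖c‖ ^ 2 = ‖c - m‖ ^ 2 + 2 * inner ℝ (c - m) m + ‖m‖ ^ 2 := by
    rw [← norm_add_sq_real, sub_add_cancel]
  have h4 : (1 / (n : ℝ)) * ∑ i, ‖(c - m) + x i‖ ^ 2
      = ‖c - m‖ ^ 2 + 2 * ((1 / (n : ℝ)) * inner ℝ (c - m) (∑ i, x i))
        + (1 / (n : ℝ)) * ∑ i, ‖x i‖ ^ 2 := by
    simp only [norm_add_sq_real, Finset.sum_add_distrib, ← Finset.mul_sum, ← inner_sum,
      Finset.sum_const, Finset.card_univ, Fintype.card_fin, nsmul_eq_mul]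
    field_simp
  rw [h4, h2, h3]
  nlinarith [sq_nonneg ‖m‖]

/-- One-step recursion inequality for the full-gradient estimator `F_t` of
SARAH-Compositional: with `∇f(y) = (1/n) Σ ∇f_i(y)`,
`(1/n) Σ_i ‖F₀ − (G')ᵀ∇f_i(u') + Gᵀ∇f_i(u) − Gᵀ∇f(u)‖²
  ≤ ‖F₀ − (G')ᵀ∇f(u')‖² + (1/n) Σ_i ‖Gᵀ∇f_i(u) − (G')ᵀ∇f_i(u')‖²`. -/
theorem full_gradient_one_step_recursion
    (d l n : ℕ) (hn : 0 < n)
    (f : Fin n → EuclideanSpace ℝ (Fin l) → ℝ)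
    (hfdiff : ∀ i, Differentiable ℝ (f i))
    (gradf : EuclideanSpace ℝ (Fin l) → EuclideanSpace ℝ (Fin l))
    (hgradf : gradf = fun y => (1 / (n : ℝ)) • ∑ i, gradient (f i) y)
    (G G' : EuclideanSpace ℝ (Fin d) →L[ℝ] EuclideanSpace ℝ (Fin l))
    (u u' : EuclideanSpace ℝ (Fin l)) (F₀ : EuclideanSpace ℝ (Fin d)) :
    (1 / (n : ℝ)) * ∑ i, ‖F₀ - (ContinuousLinearMap.adjoint G') (gradient (f i) u')
          + (ContinuousLinearMap.adjoint G) (gradient (f i) u)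
          - (ContinuousLinearMap.adjoint G) (gradf u)‖ ^ 2
      ≤ ‖F₀ - (ContinuousLinearMap.adjoint G') (gradf u')‖ ^ 2
        + (1 / (n : ℝ)) * ∑ i, ‖(ContinuousLinearMap.adjoint G) (gradient (f i) u)
            - (ContinuousLinearMap.adjoint G') (gradient (f i) u')‖ ^ 2 := by
  have key := aux_mean n hn
    (fun i => (ContinuousLinearMap.adjoint G) (gradient (f i) u)
            - (ContinuousLinearMap.adjoint G') (gradient (f i) u'))
    (F₀ - (ContinuousLinearMap.adjoint G') (gradf u'))
    ((ContinuousLinearMap.adjoint G) (gradf u) - (ContinuousLinearMap.adjoint G') (gradf u'))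
    (by simp only [hgradf, map_smul, map_sum, Finset.sum_sub_distrib, smul_sub])
  refine le_trans (le_of_eq ?_) key
  congr 1
  refine Finset.sum_congr rfl fun i _ => ?_
  congr 2
  abel
end

section
/- For all real numbers A > 0, B > 0 and S₁ > 0, S₂ > 0, S₃ > 0, (S₁ + S₂ + S₃)(1 + 2/S₃)(A/S₁ + B/S₂) ≥ (√(S₁+S₂) + √2)² · (√A + √B)² / (S₁ + S₂). -/
/-- Combined optimal-batch-size lower bound: for `A, B, S₁, S₂, S₃ > 0`,
`(S₁ + S₂ + S₃)(1 + 2/S₃)(A/S₁ + B/S₂) ≥ (√(S₁+S₂) + √2)²(√A + √B)²/(S₁+S₂)`. -/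
theorem batch_size_combined_lower_bound
    (A B S₁ S₂ S₃ : ℝ) (hA : 0 < A) (hB : 0 < B)
    (hS₁ : 0 < S₁) (hS₂ : 0 < S₂) (hS₃ : 0 < S₃) :
    (Real.sqrt (S₁ + S₂) + Real.sqrt 2) ^ 2 * (Real.sqrt A + Real.sqrt B) ^ 2 / (S₁ + S₂)
      ≤ (S₁ + S₂ + S₃) * (1 + 2 / S₃) * (A / S₁ + B / S₂) := by
  have hT : 0 < S₁ + S₂ := by positivity
  have h1 : (Real.sqrt (S₁ + S₂) + Real.sqrt 2) ^ 2 ≤ (S₁ + S₂ + S₃) * (1 + 2 / S₃) := by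
    have ht := Real.sq_sqrt hT.le
    have hr : Real.sqrt 2 ^ 2 = 2 := Real.sq_sqrt (by norm_num)
    generalize Real.sqrt (S₁ + S₂) = t at *
    generalize Real.sqrt 2 = r at *
    have key : (S₁ + S₂ + S₃) * (1 + 2 / S₃) - (t + r) ^ 2 = (S₃ - t * r) ^ 2 / S₃ := by
      rw [← ht, ← hr]
      field_simp
      ring
    have : 0 ≤ (S₃ - t * r) ^ 2 / S₃ := by positivity
    linarith
  have h2 : (Real.sqrt A + Real.sqrt B) ^ 2 / (S₁ + S₂) ≤ A / S₁ + B / S₂ := by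
    have ha := Real.sq_sqrt hA.le
    have hb := Real.sq_sqrt hB.le
    generalize Real.sqrt A = a at *
    generalize Real.sqrt B = b at *
    have key : A / S₁ + B / S₂ - (a + b) ^ 2 / (S₁ + S₂)
        = (a * S₂ - b * S₁) ^ 2 / (S₁ * S₂ * (S₁ + S₂)) := by
      rw [← ha, ← hb]
      field_simp
      ring
    have : 0 ≤ (a * S₂ - b * S₁) ^ 2 / (S₁ * S₂ * (S₁ + S₂)) := by positivity
    linarith
  rw [mul_div_assoc]
  exact mul_le_mul h1 h2 (by positivity) (by positivity)
end
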